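/- Let p be a prime and let Λ_p be the group presented by generators a, s, t and relators a^p, s t s⁻¹ t⁻¹, (t a t⁻¹) a (t a t⁻¹)⁻¹ a⁻¹, and (s a s⁻¹)⁻¹ (t a t⁻¹) a. Then Λ_p has quadratic Dehn function with respect to this presentation: there exists a constant C such that every word w in the free group on {a, s, t} representing the identity of Λ_p equals, in the free group, a product of at most C·|w|² + C conjugates of the four relators and their inverses. -/

import Mathlib

namespace Baumslag

/-- The generators of `Λ_p`: `a`, `s`, `t`. -/
inductive Gen : Type
  | a : Gen
  | s : Gen
  | t : Gen
deriving DecidableEq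

open Gen

/-- The relators of Baumslag's group
`Λ_p = ⟨a, s, t | aᵖ, [s,t], [tat⁻¹, a], sas⁻¹ = (tat⁻¹)a⟩`. -/
def LamRel (p : ℕ) : Set (FreeGroup Gen) :=
  { FreeGroup.of a ^ p,
    FreeGroup.of s * FreeGroup.of t * (FreeGroup.of s)⁻¹ * (FreeGroup.of t)⁻¹,
    (FreeGroup.of t * FreeGroup.of a * (FreeGroup.of t)⁻¹) * FreeGroup.of a *
      (FreeGroup.of t * FreeGroup.of a * (FreeGroup.of t)⁻¹)⁻¹ * (FreeGroup.of a)⁻¹,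
    (FreeGroup.of s * FreeGroup.of a * (FreeGroup.of s)⁻¹)⁻¹ *
      (FreeGroup.of t * FreeGroup.of a * (FreeGroup.of t)⁻¹) * FreeGroup.of a }

/-- Baumslag's finitely presented metabelian group `Λ_p`. -/
def Lam (p : ℕ) : Type := PresentedGroup (LamRel p)

instance (p : ℕ) : Group (Lam p) := by unfold Lam; infer_instance

end Baumslag

namespace Baumslag
open Gen

/-- `w` is a product of at most `k` conjugates of relators. -/
def Ar (p k : ℕ) (w : FreeGroup Gen) : Prop :=
  ∃ L : List (FreeGroup Gen × FreeGroup Gen), L.length ≤ k ∧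
    (∀ q ∈ L, q.2 ∈ LamRel p ∨ q.2⁻¹ ∈ LamRel p) ∧
    w = (L.map fun q => q.1 * q.2 * q.1⁻¹).prod

/-- `u` and `v` differ by at most `k` relators. -/
def E (p k : ℕ) (u v : FreeGroup Gen) : Prop := Ar p k (u * v⁻¹)

lemma Ar.mono {p k l : ℕ} {w} (h : Ar p k w) (hk : k ≤ l) : Ar p l w := by
  obtain ⟨L, h1, h2, h3⟩ := h
  exact ⟨L, h1.trans hk, h2, h3⟩

lemma Ar.one (p : ℕ) : Ar p 0 1 := ⟨[], by simp⟩

lemma Ar.mul {p k l : ℕ} {u v} (h : Ar p k u) (h' : Ar p l v) : Ar p (k + l) (u * v) := by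
  obtain ⟨L, h1, h2, h3⟩ := h
  obtain ⟨M, g1, g2, g3⟩ := h'
  refine ⟨L ++ M, by simp; omega, ?_, by simp [h3, g3]⟩
  intro q hq
  rcases List.mem_append.1 hq with hq | hq
  · exact h2 q hq
  · exact g2 q hq

lemma Ar.single {p : ℕ} {r : FreeGroup Gen} (x) (h : r ∈ LamRel p ∨ r⁻¹ ∈ LamRel p) :
    Ar p 1 (x * r * x⁻¹) := ⟨[(x, r)], by simp, by simpa using h, by simp⟩

lemma Ar.rec' {p : ℕ} {P : ℕ → FreeGroup Gen → Prop} (h0 : P 0 1)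
    (h1 : ∀ k x r w, (r ∈ LamRel p ∨ r⁻¹ ∈ LamRel p) → P k w → P (k + 1) (x * r * x⁻¹ * w)) :
    ∀ L : List (FreeGroup Gen × FreeGroup Gen),
      (∀ q ∈ L, q.2 ∈ LamRel p ∨ q.2⁻¹ ∈ LamRel p) →
      P L.length (L.map fun q => q.1 * q.2 * q.1⁻¹).prod := by
  intro L
  induction L with
  | nil => intro _; simpa using h0
  | cons q L ih =>
    intro h
    simp only [List.map_cons, List.prod_cons, List.length_cons]
    exact h1 _ _ _ _ (h q (by simp)) (ih fun q' hq' => h q' (by simp [hq']))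

lemma Ar.conj {p k : ℕ} {w} (g : FreeGroup Gen) (h : Ar p k w) : Ar p k (g * w * g⁻¹) := by
  obtain ⟨L, h1, h2, rfl⟩ := h
  refine Ar.mono ?_ h1
  refine Ar.rec' (P := fun k w => Ar p k (g * w * g⁻¹)) ?_ ?_ L h2
  · simpa using Ar.one p
  · intro k x r w hr hw
    have := (Ar.single (g * x) hr).mul hw
    rw [add_comm k 1]
    convert this using 1
    group

lemma Ar.inv {p k : ℕ} {w} (h : Ar p k w) : Ar p k w⁻¹ := by
  obtain ⟨L, h1, h2, rfl⟩ := h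
  refine Ar.mono ?_ h1
  refine Ar.rec' (P := fun k w => Ar p k (w⁻¹)) ?_ ?_ L h2
  · simpa using Ar.one p
  · intro k x r w hr hw
    have := hw.mul (Ar.single (r := r⁻¹) x (by rw [inv_inv]; exact hr.symm))
    convert this using 1
    group

lemma E.mono {p k l : ℕ} {u v} (h : E p k u v) (hk : k ≤ l) : E p l u v := Ar.mono h hk
lemma E.refl {p : ℕ} (u) : E p 0 u u := by simpa [E] using Ar.one p
lemma E.of_eq {p : ℕ} {u v} (h : u = v) : E p 0 u v := h ▸ E.refl u
lemma E.symm {p k : ℕ} {u v} (h : E p k u v) : E p k v u := by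
  have := Ar.inv h
  simpa [E] using this
lemma E.trans {p k l : ℕ} {u v w} (h : E p k u v) (h' : E p l v w) : E p (k + l) u w := by
  have := Ar.mul h h'
  simpa [E] using this
lemma E.mul {p k l : ℕ} {u v u' v'} (h : E p k u v) (h' : E p l u' v') :
    E p (k + l) (u * u') (v * v') := by
  have := Ar.mul (Ar.conj u h') h
  rw [add_comm]
  unfold E
  convert this using 1
  group
lemma E.inv {p k : ℕ} {u v} (h : E p k u v) : E p k u⁻¹ v⁻¹ := by
  have := Ar.conj u⁻¹ (Ar.inv h)
  unfold E
  convert this using 1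
  group
lemma E.left {p k : ℕ} {u v} (x) (h : E p k u v) : E p k (x * u) (x * v) := by
  simpa using (E.refl x).mul h
lemma E.right {p k : ℕ} {u v} (x) (h : E p k u v) : E p k (u * x) (v * x) := by
  simpa using h.mul (E.refl x)
/-- conjugation by equivalent elements -/
lemma E.cj {p k l : ℕ} {u v x y} (hx : E p l x y) (h : E p k u v) :
    E p (l + k + l) (x * u * x⁻¹) (y * v * y⁻¹) := (hx.mul h).mul hx.inv
lemma E.cj' {p k : ℕ} {u v} (x) (h : E p k u v) :
    E p k (x * u * x⁻¹) (x * v * x⁻¹) := (h.left x).right _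

lemma E.mk {p k : ℕ} {u v} (h : E p k u v) :
    PresentedGroup.mk (LamRel p) u = PresentedGroup.mk (LamRel p) v := by
  obtain ⟨L, -, h2, h3⟩ := h
  have key : PresentedGroup.mk (LamRel p) (u * v⁻¹) = 1 := by
    rw [h3]
    refine Ar.rec' (P := fun _ w => PresentedGroup.mk (LamRel p) w = 1) (map_one _) ?_ L h2
    intro k x r w hr hw
    have : PresentedGroup.mk (LamRel p) r = 1 := by
      rcases hr with hr | hr
      · exact PresentedGroup.one_of_mem hr
      · have := PresentedGroup.one_of_mem hr
        rwa [map_inv, inv_eq_one] at this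
    simp [this, hw]
  rw [map_mul, map_inv, mul_inv_eq_one] at key
  exact key

lemma E.exi {p : ℕ} {u v} (h : PresentedGroup.mk (LamRel p) u = PresentedGroup.mk (LamRel p) v) :
    ∃ k, E p k u v := by
  have h1 : u * v⁻¹ ∈ Subgroup.normalClosure (LamRel p) := by
    rw [← PresentedGroup.mk_eq_one_iff, map_mul, map_inv, h, mul_inv_cancel]
  let N : Subgroup (FreeGroup Gen) :=
    { carrier := {w | ∃ k, Ar p k w}
      mul_mem' := fun ⟨k, hk⟩ ⟨l, hl⟩ => ⟨_, hk.mul hl⟩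
      one_mem' := ⟨_, Ar.one p⟩
      inv_mem' := fun ⟨k, hk⟩ => ⟨_, hk.inv⟩ }
  have hN : N.Normal := ⟨fun w ⟨k, hk⟩ g => ⟨k, hk.conj g⟩⟩
  have : Subgroup.normalClosure (LamRel p) ≤ N := by
    apply Subgroup.normalClosure_le_normal
    intro r hr
    exact ⟨1, by simpa using Ar.single (p := p) 1 (Or.inl hr)⟩
  exact this h1

lemma E.exi_unif {p : ℕ} {ι : Type*} [Finite ι] {u v : ι → FreeGroup Gen}
    (h : ∀ i, PresentedGroup.mk (LamRel p) (u i) = PresentedGroup.mk (LamRel p) (v i)) :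
    ∃ k, ∀ l, k ≤ l → ∀ i, E p l (u i) (v i) := by
  choose k hk using fun i => E.exi (h i)
  obtain ⟨m, hm⟩ := (Set.finite_range k).bddAbove
  exact ⟨m, fun l hl i => (hk i).mono ((hm ⟨i, rfl⟩).trans hl)⟩

/-- power of `a` with exponent in `ZMod p` -/
def A {p : ℕ} (c : ZMod p) : FreeGroup Gen := FreeGroup.of a ^ c.val

lemma A_zero {p : ℕ} : A (0 : ZMod p) = 1 := by simp [A]

/-- Horner word -/
def H {p : ℕ} (x : FreeGroup Gen) : List (ZMod p) → FreeGroup Gen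
  | [] => 1
  | c :: l => A c * (x * H x l * x⁻¹)

abbrev S : FreeGroup Gen := FreeGroup.of s
abbrev T : FreeGroup Gen := FreeGroup.of t

/-- Uniform constants. -/
structure Cst (p K : ℕ) : Prop where
  merge : ∀ c d : ZMod p, E p K (A c * A d) (A (c + d))
  neg : ∀ c : ZMod p, E p K (A c)⁻¹ (A (-c))
  comm : E p K (T * S) (S * T)
  comm2 : E p K (S⁻¹ * (S⁻¹ * T)) ((S⁻¹ * T) * S⁻¹)
  comm3 : E p K ((T⁻¹ * S) * T⁻¹) (T⁻¹ * (T⁻¹ * S))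
  rel1 : ∀ c : ZMod p, E p K (T * A c * T⁻¹) (A (-1 * c) * (S * A (1 * c) * S⁻¹))
  rel2 : ∀ c : ZMod p, E p K (S⁻¹ * A c * S⁻¹⁻¹)
    (A (1 * c) * ((S⁻¹ * T) * A (-1 * c) * (S⁻¹ * T)⁻¹))
  rel3 : ∀ c : ZMod p, E p K ((T⁻¹ * S) * A c * (T⁻¹ * S)⁻¹)
    (A (1 * c) * (T⁻¹ * A (1 * c) * T⁻¹⁻¹))
  low : ∀ c : ZMod p, E p K (S * A c * S⁻¹) (A c * (T * A c * T⁻¹))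

section grp
variable {G : Type*} [Group G] {a s t : G}

lemma grp_low (h3 : (t * a * t⁻¹) * a * (t * a * t⁻¹)⁻¹ * a⁻¹ = 1)
    (h4 : (s * a * s⁻¹)⁻¹ * (t * a * t⁻¹) * a = 1) (n : ℕ) :
    s * a ^ n * s⁻¹ = a ^ n * (t * a ^ n * t⁻¹) ∧ Commute (t * a ^ n * t⁻¹) (a ^ n) := by
  have hc : Commute (t * a * t⁻¹) a := by
    have := mul_inv_eq_one.1 h3
    rwa [mul_inv_eq_iff_eq_mul] at this
  have he : s * a * s⁻¹ = (t * a * t⁻¹) * a := by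
    rw [mul_assoc, inv_mul_eq_one] at h4
    exact h4
  rw [← conj_pow, ← conj_pow, he, hc.mul_pow]
  exact ⟨(hc.pow_pow n n).eq, hc.pow_pow n n⟩
end grp

lemma exists_Cst (p : ℕ) (hp : p.Prime) : ∃ K, 1 ≤ K ∧ Cst p K := by
  have : Fact p.Prime := ⟨hp⟩
  let π := PresentedGroup.mk (LamRel p)
  have r1 : π (FreeGroup.of a) ^ p = 1 := by
    rw [← map_pow]; exact PresentedGroup.one_of_mem (by simp [LamRel])
  have r2 : π S * π T * (π S)⁻¹ * (π T)⁻¹ = 1 := by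
    simp only [← map_mul, ← map_inv]
    exact PresentedGroup.one_of_mem (by simp [LamRel])
  have r3 : (π T * π (.of a) * (π T)⁻¹) * π (.of a) * (π T * π (.of a) * (π T)⁻¹)⁻¹ *
      (π (.of a))⁻¹ = 1 := by
    simp only [← map_mul, ← map_inv]
    exact PresentedGroup.one_of_mem (by simp [LamRel])
  have r4 : (π S * π (.of a) * (π S)⁻¹)⁻¹ * (π T * π (.of a) * (π T)⁻¹) * π (.of a) = 1 := by
    simp only [← map_mul, ← map_inv]
    exact PresentedGroup.one_of_mem (by simp [LamRel])
  have hst : π S * π T = π T * π S := by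
    rw [mul_inv_eq_one, mul_inv_eq_iff_eq_mul] at r2
    exact r2
  have hmerge : ∀ c d : ZMod p, π (A c) * π (A d) = π (A (c + d)) := by
    intro c d
    simp only [A, map_pow, ← pow_add, ZMod.val_add]
    rw [← Nat.mod_add_div (c.val + d.val) p, pow_add, pow_mul, r1]
    simp
  have hneg : ∀ c : ZMod p, (π (A c))⁻¹ = π (A (-c)) := by
    intro c
    rw [inv_eq_iff_mul_eq_one, hmerge]
    simp [A_zero]
  have hlow : ∀ c : ZMod p, π S * π (A c) * (π S)⁻¹ = π (A c) * (π T * π (A c) * (π T)⁻¹) := by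
    intro c
    simpa only [A, map_pow] using (grp_low r3 r4 c.val).1
  have hcom : ∀ c : ZMod p, π T * π (A c) * (π T)⁻¹ * π (A c) = π (A c) * (π T * π (A c) * (π T)⁻¹) := by
    intro c
    simpa only [A, map_pow] using (grp_low r3 r4 c.val).2.eq
  obtain ⟨k1, h1⟩ := E.exi_unif (p := p) (ι := ZMod p × ZMod p)
    (u := fun q => A q.1 * A q.2) (v := fun q => A (q.1 + q.2))
    (fun q => by rw [map_mul]; exact hmerge _ _)
  obtain ⟨k2, h2⟩ := E.exi_unif (p := p) (ι := ZMod p)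
    (u := fun q => (A q)⁻¹) (v := fun q => A (-q)) (fun q => by rw [map_inv]; exact hneg _)
  obtain ⟨k3, h3⟩ := E.exi_unif (p := p) (ι := Unit)
    (u := fun q => T * S) (v := fun q => S * T) (fun q => by rw [map_mul, map_mul]; exact hst.symm)
  obtain ⟨k4, h4⟩ := E.exi_unif (p := p) (ι := Unit)
    (u := fun q => (S⁻¹ * (S⁻¹ * T))) (v := fun q => ((S⁻¹ * T) * S⁻¹)) (fun q => by
      simp only [map_mul, map_inv]
      change (π S)⁻¹ * ((π S)⁻¹ * π T) = (π S)⁻¹ * π T * (π S)⁻¹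
      rw [mul_assoc, mul_right_inj, inv_mul_eq_iff_eq_mul, ← mul_assoc, hst, mul_inv_cancel_right])
  obtain ⟨k5, h5⟩ := E.exi_unif (p := p) (ι := Unit)
    (u := fun q => ((T⁻¹ * S) * T⁻¹)) (v := fun q => (T⁻¹ * (T⁻¹ * S))) (fun q => by
      simp only [map_mul, map_inv]
      change (π T)⁻¹ * π S * (π T)⁻¹ = (π T)⁻¹ * ((π T)⁻¹ * π S)
      symm
      rw [mul_assoc, mul_right_inj, inv_mul_eq_iff_eq_mul, ← mul_assoc, ← hst, mul_inv_cancel_right])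
  obtain ⟨k6, h6⟩ := E.exi_unif (p := p) (ι := ZMod p)
    (u := fun c => (T * A c * T⁻¹)) (v := fun c => (A (-1 * c) * (S * A (1 * c) * S⁻¹))) (fun c => by
      simp only [map_mul, map_inv, neg_mul, one_mul]
      change π T * π (A c) * (π T)⁻¹ = π (A (-c)) * (π S * π (A c) * (π S)⁻¹)
      rw [hlow, ← hneg, inv_mul_cancel_left])
  obtain ⟨k7, h7⟩ := E.exi_unif (p := p) (ι := ZMod p)
    (u := fun c => (S⁻¹ * A c * S⁻¹⁻¹)) (v := fun c =>
    (A (1 * c) * ((S⁻¹ * T) * A (-1 * c) * (S⁻¹ * T)⁻¹))) (fun c => by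
      simp only [map_mul, map_inv, neg_mul, one_mul]
      change (π S)⁻¹ * π (A c) * (π S)⁻¹⁻¹ =
        π (A c) * ((π S)⁻¹ * π T * π (A (-c)) * ((π S)⁻¹ * π T)⁻¹)
      rw [← hneg]
      have e1 : π (A c) * ((π S)⁻¹ * π T * (π (A c))⁻¹ * ((π S)⁻¹ * π T)⁻¹) =
        (π S)⁻¹ * (π S * π (A c) * (π S)⁻¹) * (π T * (π (A c))⁻¹ * (π T)⁻¹) * π S := by group
      rw [e1, hlow]
      group)
  obtain ⟨k8, h8⟩ := E.exi_unif (p := p) (ι := ZMod p)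
    (u := fun c => ((T⁻¹ * S) * A c * (T⁻¹ * S)⁻¹)) (v := fun c =>
    (A (1 * c) * (T⁻¹ * A (1 * c) * T⁻¹⁻¹))) (fun c => by
      simp only [map_mul, map_inv, neg_mul, one_mul]
      change (π T)⁻¹ * π S * π (A c) * ((π T)⁻¹ * π S)⁻¹ =
        π (A c) * ((π T)⁻¹ * π (A c) * (π T)⁻¹⁻¹)
      have e1 : (π T)⁻¹ * π S * π (A c) * ((π T)⁻¹ * π S)⁻¹ =
        (π T)⁻¹ * (π S * π (A c) * (π S)⁻¹) * π T := by group
      rw [e1, hlow, ← hcom]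
      group)
  obtain ⟨k9, h9⟩ := E.exi_unif (p := p) (ι := ZMod p)
    (u := fun c => (S * A c * S⁻¹)) (v := fun c => (A c * (T * A c * T⁻¹))) (fun c => by
      simp only [map_mul, map_inv]
      exact hlow c)
  refine ⟨1+k1+k2+k3+k4+k5+k6+k7+k8+k9, by omega, ?_⟩
  exact ⟨fun c d => h1 _ (by omega) (c, d), h2 _ (by omega), h3 _ (by omega) (), h4 _ (by omega) (),
    h5 _ (by omega) (), h6 _ (by omega), h7 _ (by omega), h8 _ (by omega), h9 _ (by omega)⟩

lemma H_append {p : ℕ} (x) (l m : List (ZMod p)) :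
    H x (l ++ m) = H x l * (x ^ l.length * H x m * (x ^ l.length)⁻¹) := by
  induction l with
  | nil => simp [H]
  | cons c l ih =>
    simp only [List.cons_append, H, ih, List.length_cons, pow_succ']
    group

lemma H_zeros {p : ℕ} (x) (n : ℕ) : H x (List.replicate n (0 : ZMod p)) = 1 := by
  induction n with
  | zero => simp [H]
  | succ n ih => simp [List.replicate_succ, H, ih, A_zero]

lemma H_pad {p : ℕ} (x) (l : List (ZMod p)) (n : ℕ) (h : l.length ≤ n) :
    ∃ l' : List (ZMod p), l'.length = n ∧ H x l' = H x l := by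
  refine ⟨l ++ List.replicate (n - l.length) 0, by simp; omega, ?_⟩
  rw [H_append, H_zeros]; simp

lemma H_shift {p : ℕ} (x) (l : List (ZMod p)) (n : ℕ) :
    H x (List.replicate n 0 ++ l) = x ^ n * H x l * (x ^ n)⁻¹ := by
  rw [H_append, H_zeros]; simp

section generic
variable {p K : ℕ}

lemma divi (hK : Cst p K) {y z : FreeGroup Gen} {α β : ZMod p}
    (h1 : ∀ c : ZMod p, E p K (y * A c * y⁻¹) (A (α * c) * (z * A (β * c) * z⁻¹)))
    (hc : E p K (y * z) (z * y)) :
    ∀ (l : List (ZMod p)) (c : ZMod p), ∃ (r : ZMod p) (g : List (ZMod p)), g.length = l.length ∧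
      E p (4 * K * l.length) (H y (c :: l)) (A r * (z * H y g * z⁻¹)) := by
  intro l
  induction l with
  | nil => intro c; exact ⟨c, [], rfl, by simpa [H] using E.refl _⟩
  | cons d l ih =>
    intro c
    obtain ⟨r, g, hg, e⟩ := ih d
    refine ⟨c + α * r, β * r :: g, by simp [hg], ?_⟩
    have e1 : E p (4 * K * l.length) (H y (c :: d :: l))
        (A c * (y * (A r * (z * H y g * z⁻¹)) * y⁻¹)) := (e.cj' y).left (A c)
    have e2 : E p 0 (A c * (y * (A r * (z * H y g * z⁻¹)) * y⁻¹))
      (A c * ((y * A r * y⁻¹) * ((y * z) * H y g * (y * z)⁻¹))) := E.of_eq (by group)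
    have e3 := ((h1 r).mul (hc.cj (E.refl (H y g)))).left (A c)
    have e4 : E p 0 (A c * (A (α * r) * (z * A (β * r) * z⁻¹) * (z * y * H y g * (z * y)⁻¹)))
      (A c * A (α * r) * (z * (A (β * r) * (y * H y g * y⁻¹)) * z⁻¹)) := E.of_eq (by group)
    have e5 := (hK.merge c (α * r)).right (z * (A (β * r) * (y * H y g * y⁻¹)) * z⁻¹)
    refine ((((e1.trans e2).trans e3).trans e4).trans e5).mono ?_
    simp only [List.length_cons]
    ring_nf
    omega

lemma side_conv (hK : Cst p K) {y z : FreeGroup Gen} {α β : ZMod p}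
    (h1 : ∀ c : ZMod p, E p K (y * A c * y⁻¹) (A (α * c) * (z * A (β * c) * z⁻¹)))
    (hc : E p K (y * z) (z * y)) :
    ∀ (n : ℕ) (l : List (ZMod p)), l.length = n → ∃ l' : List (ZMod p), l'.length = n ∧
      E p (4 * K * n * n) (H y l) (H z l') := by
  intro n
  induction n with
  | zero =>
    intro l hl
    obtain rfl := List.length_eq_zero_iff.1 hl
    exact ⟨[], rfl, by simpa [H] using E.refl _⟩
  | succ n ih =>
    intro l hl
    obtain ⟨c, l, rfl⟩ := List.exists_cons_of_length_eq_add_one hl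
    obtain ⟨r, g, hg, e⟩ := divi hK h1 hc l c
    simp only [List.length_cons, Nat.add_right_cancel_iff] at hl
    obtain ⟨g', hg', e'⟩ := ih g (by omega)
    refine ⟨r :: g', by simp [hg'], ?_⟩
    have := e.trans ((e'.cj' z).left (A r))
    refine this.mono ?_
    rw [hl]
    ring_nf
    omega

lemma rebase (hK : Cst p K) (y : FreeGroup Gen) : ∀ (l : List (ZMod p)) (c : ZMod p), ∃ l' : List (ZMod p),
    l'.length = l.length + 1 ∧
    E p (K * (l.length + 1)) (H y (c :: l))
      (y ^ l.length * (H y⁻¹ l')⁻¹ * (y ^ l.length)⁻¹) := by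
  have hn : ∀ c : ZMod p, E p K (A c) (A (-c))⁻¹ := fun c => by
    simpa using (hK.neg c).inv
  intro l
  induction l with
  | nil =>
    intro c
    exact ⟨[-c], rfl, by simpa [H] using hn c⟩
  | cons d l ih =>
    intro c
    obtain ⟨l', hl', e⟩ := ih d
    refine ⟨l' ++ [-c], by simp [hl'], ?_⟩
    have e1 := (hn c).mul (e.cj' y)
    refine (e1.trans (E.of_eq ?_)).mono (l := K * ((d :: l).length + 1)) ?_
    · rw [H_append, hl']
      simp only [H, List.length_cons, pow_succ', inv_pow]
      group
    · simp only [List.length_cons]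
      ring_nf
      omega

end generic

lemma Cm.pow {p k : ℕ} {u v} (h : E p k (u * v) (v * u)) (n : ℕ) :
    E p (n * k) (u ^ n * v) (v * u ^ n) := by
  induction n with
  | zero => simpa using E.refl v
  | succ n ih =>
    have e1 : E p 0 (u ^ (n + 1) * v) (u ^ n * (u * v)) := E.of_eq (by rw [pow_succ, mul_assoc])
    have e2 := h.left (u ^ n)
    have e3 := ih.right u
    have e4 := (e1.trans e2).trans ((E.of_eq (mul_assoc _ _ _).symm).trans e3)
    refine (e4.trans (E.of_eq ?_)).mono (l := (n + 1) * k) ?_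
    · rw [pow_succ, mul_assoc]
    · ring_nf; omega

lemma Cm.inv {p k : ℕ} {u v} (h : E p k (u * v) (v * u)) : E p k (u⁻¹ * v) (v * u⁻¹) := by
  have := ((h.symm.left u⁻¹).right u⁻¹)
  have e1 : u⁻¹ * (v * u) * u⁻¹ = u⁻¹ * v := by group
  have e2 : u⁻¹ * (u * v) * u⁻¹ = v * u⁻¹ := by group
  rwa [e1, e2] at this

lemma Cm.zpow {p k : ℕ} {u v} (h : E p k (u * v) (v * u)) (n : ℤ) :
    E p (n.natAbs * k) (u ^ n * v) (v * u ^ n) := by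
  rcases Int.natAbs_eq n with hn | hn
  · have := Cm.pow h n.natAbs
    rw [← zpow_natCast, ← hn] at this
    exact this
  · have := Cm.inv (Cm.pow h n.natAbs)
    rw [← zpow_natCast, ← zpow_neg, ← hn] at this
    exact this

lemma Cm.zz {p k : ℕ} {u v} (h : E p k (u * v) (v * u)) (i j : ℤ) :
    E p (j.natAbs * (i.natAbs * k)) (u ^ i * v ^ j) (v ^ j * u ^ i) :=
  (Cm.zpow (Cm.zpow h i).symm j).symm

lemma mul_pow_E {p k : ℕ} {u v} (h : E p k (u * v) (v * u)) (n : ℕ) :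
    E p (n * n * k) ((u * v) ^ n) (u ^ n * v ^ n) := by
  induction n with
  | zero => simpa using E.refl 1
  | succ n ih =>
    have e1 : E p 0 ((u * v) ^ (n + 1)) ((u * v) ^ n * (u * v)) := E.of_eq (pow_succ _ _)
    have e2 := ih.right (u * v)
    have e3 : E p 0 (u ^ n * v ^ n * (u * v)) (u ^ n * (v ^ n * u) * v) := E.of_eq (by group)
    have e4 := ((Cm.pow h.symm n).left (u ^ n)).right v
    refine ((((e1.trans e2).trans e3).trans e4).trans (E.of_eq ?_)).mono
      (l := (n + 1) * (n + 1) * k) ?_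
    · rw [pow_succ, pow_succ]; group
    · ring_nf; omega

section generic
variable {p K : ℕ}

lemma lower (hK : Cst p K) : ∀ l : List (ZMod p), ∃ l' : List (ZMod p), l'.length = l.length + 1 ∧
    E p (4 * K * l.length) (S * H T l * S⁻¹) (H T l') := by
  intro l
  induction l with
  | nil => exact ⟨[0], rfl, by simpa [H, A_zero] using E.refl _⟩
  | cons c l ih =>
    obtain ⟨l', hl', e⟩ := ih
    obtain ⟨d, l', rfl⟩ := List.exists_cons_of_length_eq_add_one hl'
    refine ⟨c :: (c + d) :: l', by simpa using hl', ?_⟩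
    have e1 : E p 0 (S * H T (c :: l) * S⁻¹)
      ((S * A c * S⁻¹) * ((S * T) * H T l * (S * T)⁻¹)) := E.of_eq (by simp only [H]; group)
    have e2 := (hK.low c).mul (hK.comm.symm.cj (E.refl (H T l)))
    have e3 : E p 0 ((A c * (T * A c * T⁻¹)) * ((T * S) * H T l * (T * S)⁻¹))
      (A c * (T * (A c * (S * H T l * S⁻¹)) * T⁻¹)) := E.of_eq (by group)
    have e4 := ((e.left (A c)).cj' T).left (A c)
    have e5 : E p 0 (A c * (T * (A c * H T (d :: l')) * T⁻¹))
      (A c * (T * ((A c * A d) * (T * H T l' * T⁻¹)) * T⁻¹)) := E.of_eq (by simp only [H]; group)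
    have e6 := (((hK.merge c d).right (T * H T l' * T⁻¹)).cj' T).left (A c)
    refine (((((e1.trans e2).trans e3).trans e4).trans e5).trans e6).mono ?_
    simp only [List.length_cons]
    ring_nf; omega

lemma lowerN (hK : Cst p K) : ∀ (v : ℕ) (l : List (ZMod p)), ∃ l' : List (ZMod p), l'.length = l.length + v ∧
    E p (4 * K * v * (l.length + v)) (S ^ v * H T l * (S ^ v)⁻¹) (H T l') := by
  intro v
  induction v with
  | zero => intro l; exact ⟨l, rfl, by simpa using E.refl _⟩
  | succ v ih =>
    intro l
    obtain ⟨l1, h1, e1⟩ := lower hK l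
    obtain ⟨l2, h2, e2⟩ := ih l1
    refine ⟨l2, by omega, ?_⟩
    have e0 : E p 0 (S ^ (v + 1) * H T l * (S ^ (v + 1))⁻¹)
      (S ^ v * (S * H T l * S⁻¹) * (S ^ v)⁻¹) := E.of_eq (by rw [pow_succ]; group)
    refine ((e0.trans (e1.cj' _)).trans e2).mono ?_
    rw [h1]
    ring_nf; nlinarith

lemma shift (hK : Cst p K) (u v : ℕ) (l : List (ZMod p)) : ∃ l' : List (ZMod p), l'.length = l.length + v + u ∧
    E p (4 * K * v * (l.length + v)) ((T ^ u * S ^ v) * H T l * (T ^ u * S ^ v)⁻¹) (H T l') := by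
  obtain ⟨l1, h1, e1⟩ := lowerN hK v l
  refine ⟨List.replicate u 0 ++ l1, by simp; omega, ?_⟩
  rw [H_shift]
  have := e1.cj' (T ^ u)
  convert this using 1
  group

lemma reverse0 (hK : Cst p K) (l : List (ZMod p)) : ∃ l' : List (ZMod p), l'.length = l.length ∧
    E p (20 * K * (l.length * l.length)) (H T l) (H T l')⁻¹ := by
  obtain _ | ⟨c, l⟩ := l
  · exact ⟨[], rfl, by simpa [H] using E.refl _⟩
  set n := l.length with hn
  obtain ⟨l1, h1, e1⟩ := side_conv hK hK.rel1 hK.comm (n + 1) (c :: l) (by simp [hn])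
  obtain ⟨c1, l1, rfl⟩ := List.exists_cons_of_length_eq_add_one h1
  simp only [List.length_cons, Nat.add_right_cancel_iff] at h1
  obtain ⟨l2, h2, e2⟩ := rebase hK S l1 c1
  obtain ⟨l3, h3, e3⟩ := side_conv hK hK.rel2 hK.comm2 (n + 1) l2 (by omega)
  obtain ⟨c3, l3, rfl⟩ := List.exists_cons_of_length_eq_add_one h3
  simp only [List.length_cons, Nat.add_right_cancel_iff] at h3
  obtain ⟨l4, h4, e4⟩ := rebase hK (S⁻¹ * T) l3 c3
  have hx : (S⁻¹ * T)⁻¹ = T⁻¹ * S := by group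
  rw [hx] at e4
  obtain ⟨l5, h5, e5⟩ := side_conv hK hK.rel3 hK.comm3 (n + 1) l4 (by omega)
  obtain ⟨c5, l5, rfl⟩ := List.exists_cons_of_length_eq_add_one h5
  simp only [List.length_cons, Nat.add_right_cancel_iff] at h5
  obtain ⟨l6, h6, e6⟩ := rebase hK (T⁻¹) l5 c5
  refine ⟨l6, by simp [h6, h5, hn], ?_⟩
  rw [h1] at e2
  rw [h3] at e4
  rw [h5, inv_inv] at e6
  have ex : E p (n * n * K) (S ^ n * (S⁻¹ * T) ^ n) (T ^ n) := by
    have := (mul_pow_E (Cm.inv hK.comm.symm) n).left (S ^ n)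
    convert this using 1
    rw [inv_pow]; group
  have e7 := (e3.trans (e4.trans ((e5.trans e6).inv.cj' ((S⁻¹ * T) ^ n)))).inv.cj' (S ^ n)
  have e8 := ex.cj (E.refl ((T⁻¹) ^ n * (H T l6)⁻¹ * ((T⁻¹) ^ n)⁻¹))
  have e9 := ((e1.trans e2).trans e7).trans ((E.of_eq (by group)).trans (e8.trans (E.of_eq
    (show _ = (H T l6)⁻¹ by rw [inv_pow]; group))))
  refine e9.mono ?_
  simp only [List.length_cons, ← hn]
  ring_nf; nlinarith

end generic

/-- The general principle: homs killing relators respect equality in `Λ_p`. -/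
lemma lift_eq {p : ℕ} {G : Type*} [Group G] (f : Gen → G)
    (h1 : f a ^ p = 1) (h2 : f s * f t * (f s)⁻¹ * (f t)⁻¹ = 1)
    (h3 : (f t * f a * (f t)⁻¹) * f a * (f t * f a * (f t)⁻¹)⁻¹ * (f a)⁻¹ = 1)
    (h4 : (f s * f a * (f s)⁻¹)⁻¹ * (f t * f a * (f t)⁻¹) * f a = 1)
    {u v : FreeGroup Gen}
    (h : PresentedGroup.mk (LamRel p) u = PresentedGroup.mk (LamRel p) v) :
    FreeGroup.lift f u = FreeGroup.lift f v := by
  have h5 : u * v⁻¹ ∈ Subgroup.normalClosure (LamRel p) := by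
    rw [← PresentedGroup.mk_eq_one_iff, map_mul, map_inv, h, mul_inv_cancel]
  have := PresentedGroup.to_group_eq_one_of_mem_closure (f := f) (rels := LamRel p) (by
    intro r hr
    simp only [LamRel, Set.mem_insert_iff, Set.mem_singleton_iff] at hr
    rcases hr with rfl | rfl | rfl | rfl
    · simpa using h1
    · simpa using h2
    · simpa using h3
    · simpa using h4) _ h5
  rwa [map_mul, map_inv, mul_inv_eq_one] at this

/-- exponent of `t` -/
def fT : Gen → Multiplicative ℤ
  | a => 1
  | s => 1
  | t => Multiplicative.ofAdd 1

/-- exponent of `s` -/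
def fS : Gen → Multiplicative ℤ
  | a => 1
  | s => Multiplicative.ofAdd 1
  | t => 1

lemma H_lift_comm {p : ℕ} {G : Type*} [CommGroup G] (f : Gen → G) (hf : f a = 1)
    (x) (l : List (ZMod p)) : FreeGroup.lift f (H x l) = 1 := by
  induction l with
  | nil => simp [H]
  | cons c l ih => simp [H, ih, A, hf]

section rep
variable (p : ℕ) [Fact p.Prime]

/-- polynomial of a coefficient list -/
noncomputable def poly : List (ZMod p) → Polynomial (ZMod p)
  | [] => 0
  | c :: l => Polynomial.C c + Polynomial.X * poly l

lemma poly_cons_inj {c d : ZMod p} {f g : Polynomial (ZMod p)}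
    (h : Polynomial.C c + Polynomial.X * f = Polynomial.C d + Polynomial.X * g) :
    c = d ∧ f = g := by
  have h0 : c = d := by simpa using congrArg (Polynomial.eval 0) h
  subst h0
  refine ⟨rfl, ?_⟩
  exact mul_left_cancel₀ Polynomial.X_ne_zero (add_left_cancel h)

lemma poly_inj : ∀ {l m : List (ZMod p)}, l.length = m.length → poly p l = poly p m → l = m
  | [], [], _, _ => rfl
  | [], _ :: _, h, _ => by simp at h
  | _ :: _, [], h, _ => by simp at h
  | c :: l, d :: m, h, e => by
    obtain ⟨h1, h2⟩ := poly_cons_inj p e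
    rw [h1, poly_inj (by simpa using h) h2]

lemma poly_neg (l : List (ZMod p)) : poly p (l.map Neg.neg) = - poly p l := by
  induction l with
  | nil => simp [poly]
  | cons c l ih => simp [poly, ih]; ring

lemma H_of_poly_zero (x) : ∀ l : List (ZMod p), poly p l = 0 → H x l = 1
  | [], _ => rfl
  | c :: l, h => by
    obtain ⟨h1, h2⟩ := poly_cons_inj p (d := 0) (g := 0) (h.trans (by simp))
    simp [H, h1, A_zero, H_of_poly_zero x l h2]

lemma one_add_X_ne : (1 + RatFunc.X : RatFunc (ZMod p)) ≠ 0 := by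
  have : (1 + RatFunc.X : RatFunc (ZMod p)) =
    algebraMap (Polynomial (ZMod p)) _ (Polynomial.X + Polynomial.C 1) := by
    simp [add_comm]
  rw [this]
  exact fun h => Polynomial.X_add_C_ne_zero (1 : ZMod p)
    (RatFunc.algebraMap_injective _ (h.trans (map_zero _).symm))

/-- affine action -/
noncomputable def fA : Gen → Equiv.Perm (RatFunc (ZMod p))
  | a => Equiv.addRight 1
  | s => Units.mulLeft (Units.mk0 _ (one_add_X_ne p))
  | t => Units.mulLeft (Units.mk0 _ (RatFunc.X_ne_zero))

noncomputable abbrev act := FreeGroup.lift (fA p)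

lemma addR_pow (n : ℕ) (x : RatFunc (ZMod p)) : ((fA p a) ^ n) x = x + n := by
  induction n with
  | zero => simp
  | succ n ih => rw [pow_succ', Equiv.Perm.mul_apply, ih]; simp [fA]; ring

lemma act_eq {u v : FreeGroup Gen}
    (h : PresentedGroup.mk (LamRel p) u = PresentedGroup.mk (LamRel p) v) :
    act p u = act p v := by
  have hX : (RatFunc.X : RatFunc (ZMod p)) ≠ 0 := RatFunc.X_ne_zero
  have hY := one_add_X_ne p
  have hst : fA p s * fA p t = fA p t * fA p s := by
    ext x; simp [fA]; ring
  have hta : ∀ x, (fA p t * fA p a * (fA p t)⁻¹) x = x + RatFunc.X := by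
    intro x
    simp only [Equiv.Perm.mul_apply]
    simp [fA]; field_simp
  have hsa : ∀ x, (fA p s * fA p a * (fA p s)⁻¹) x = x + (1 + RatFunc.X) := by
    intro x
    simp only [Equiv.Perm.mul_apply]
    simp [fA]; field_simp
  refine lift_eq (fA p) ?_ ?_ ?_ ?_ h
  · ext x
    rw [addR_pow]; simp
  · rw [mul_inv_eq_one, mul_inv_eq_iff_eq_mul]
    exact hst
  · rw [mul_inv_eq_one, mul_inv_eq_iff_eq_mul]
    ext x
    change (fA p t * fA p a * (fA p t)⁻¹) (fA p a x) = fA p a ((fA p t * fA p a * (fA p t)⁻¹) x)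
    rw [hta, hta]
    simp [fA]; ring
  · rw [mul_assoc, inv_mul_eq_one]
    ext x
    change _ = (fA p t * fA p a * (fA p t)⁻¹) (fA p a x)
    rw [hsa, hta]
    simp [fA]; ring

lemma act_H (l : List (ZMod p)) (x : RatFunc (ZMod p)) :
    act p (H T l) x = x + algebraMap _ _ (poly p l) := by
  induction l generalizing x with
  | nil => simp [H, poly]
  | cons c l ih =>
    have hX : (RatFunc.X : RatFunc (ZMod p)) ≠ 0 := RatFunc.X_ne_zero
    have e1 : act p (A c) = fA p a ^ c.val := by simp [A]
    have e2 : act p T = fA p t := by simp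
    have e3 : ((c.val : ℕ) : RatFunc (ZMod p)) = algebraMap _ _ (Polynomial.C c) := by
      have : Polynomial.C c = ((c.val : ℕ) : Polynomial (ZMod p)) := by
        rw [← map_natCast Polynomial.C, ZMod.natCast_zmod_val]
      rw [this, map_natCast]
    simp only [H, map_mul, map_inv, e1, e2, Equiv.Perm.mul_apply, ih,
      addR_pow, poly, map_add, e3]
    simp [fA]; field_simp; ring

lemma poly_of_act {l m : List (ZMod p)} (h : act p (H T l) = act p (H T m)) :
    poly p l = poly p m := by
  have := congrArg (fun f => f 0) h
  simp only [act_H, zero_add] at this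
  exact RatFunc.algebraMap_injective _ this

lemma poly_of_act_inv {l m : List (ZMod p)} (h : act p (H T l) = act p (H T m)⁻¹) :
    poly p l = poly p (m.map Neg.neg) := by
  have h2 : act p (H T l) * act p (H T m) = 1 := by rw [h, map_inv]; simp
  have := congrArg (fun f => f 0) h2
  simp only [Equiv.Perm.mul_apply, act_H, zero_add, Equiv.Perm.one_apply, ← map_add] at this
  have := RatFunc.algebraMap_injective _ (this.trans (map_zero _).symm)
  rw [poly_neg]
  linear_combination this

end rep

section final
variable {p K : ℕ} [Fact p.Prime]

lemma revers (hK : Cst p K) (l : List (ZMod p)) :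
    E p (20 * K * (l.length * l.length)) (H T l) (H T (l.map Neg.neg))⁻¹ := by
  obtain ⟨l', h, e⟩ := reverse0 hK l
  have h1 := poly_of_act_inv p (act_eq p e.mk)
  have h2 : l = l'.map Neg.neg := poly_inj p (by simp [h]) h1
  have h3 : l.map Neg.neg = l' := by rw [h2]; simp
  rw [h3]
  exact e

lemma commu (hK : Cst p K) (l m : List (ZMod p)) :
    E p (60 * K * ((l.length + m.length) * (l.length + m.length)))
      (H T l * (T ^ l.length * H T m * (T ^ l.length)⁻¹))
      ((T ^ l.length * H T m * (T ^ l.length)⁻¹) * H T l) := by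
  have e1 := revers hK (l ++ m)
  rw [List.map_append, H_append, H_append, List.length_map] at e1
  have e2 := ((revers hK m).symm.cj' (T ^ l.length)).mul (revers hK l).symm
  have e3 := e1.trans ((E.of_eq (by group)).trans e2)
  refine e3.mono ?_
  simp only [List.length_append]
  ring_nf
  have : 0 ≤ K * l.length * m.length := Nat.zero_le _
  omega

lemma mergeH (hK : Cst p K) : ∀ (k : ℕ) (l m : List (ZMod p)), l.length = 2 ^ k → m.length = 2 ^ k →
    ∃ l' : List (ZMod p), l'.length = 2 ^ k ∧ E p (120 * K * 4 ^ k) (H T l * H T m) (H T l') := by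
  intro k
  induction k with
  | zero =>
    intro l m hl hm
    obtain ⟨c, rfl⟩ := List.length_eq_one_iff.1 hl
    obtain ⟨d, rfl⟩ := List.length_eq_one_iff.1 hm
    refine ⟨[c + d], rfl, ?_⟩
    have := hK.merge c d
    simp only [H]
    refine E.mono ?_ (show K ≤ _ by omega)
    simpa using this
  | succ k ih =>
    intro l m hl hm
    have hq : 2 ^ (k + 1) = 2 ^ k + 2 ^ k := by ring
    set q := 2 ^ k with hqd
    obtain ⟨l1, l2, rfl, hl1, hl2⟩ : ∃ l1 l2, l = l1 ++ l2 ∧ l1.length = q ∧ l2.length = q :=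
      ⟨l.take q, l.drop q, by simp, by simp; omega, by simp; omega⟩
    obtain ⟨m1, m2, rfl, hm1, hm2⟩ : ∃ l1 l2, m = l1 ++ l2 ∧ l1.length = q ∧ l2.length = q :=
      ⟨m.take q, m.drop q, by simp, by simp; omega, by simp; omega⟩
    obtain ⟨r1, hr1, e1⟩ := ih l1 m1 hl1 hm1
    obtain ⟨r2, hr2, e2⟩ := ih l2 m2 hl2 hm2
    refine ⟨r1 ++ r2, by simp; omega, ?_⟩
    rw [H_append, H_append, H_append, hl1, hm1, hr1]
    have e3 := ((commu hK m1 l2).symm.left (H T l1)).right (T ^ q * H T m2 * (T ^ q)⁻¹)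
    rw [hm1, hl2] at e3
    have e4 := e1.mul (e2.cj' (T ^ q))
    have e5 := e3.trans ((E.of_eq (by group)).trans e4)
    refine ((E.of_eq (by group)).trans e5).mono ?_
    have : 4 ^ k = q * q := by rw [hqd, ← mul_pow]; norm_num
    rw [pow_succ, this]
    ring_nf; omega

lemma mulTS (hK : Cst p K) (i j i' j' : ℤ) : E p (j.natAbs * i'.natAbs * K)
    ((T ^ i * S ^ j) * (T ^ i' * S ^ j')) (T ^ (i + i') * S ^ (j + j')) := by
  have e := (((Cm.zz hK.comm.symm j i').left (T ^ i)).right (S ^ j'))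
  have e' := e.trans (E.of_eq
    (show _ = (T ^ (i + i') * S ^ (j + j')) by rw [zpow_add, zpow_add]; group))
  refine ((E.of_eq (by group)).trans e').mono ?_
  ring_nf; omega

lemma gshift (hK : Cst p K) (n : ℕ) (i j : ℤ) (hi : i.natAbs ≤ n) (hj : j.natAbs ≤ n)
    (l : List (ZMod p)) (hl : l.length ≤ 8 * n) :
    ∃ l' : List (ZMod p), l'.length ≤ 12 * n ∧ E p (88 * K * (n * n))
      (((T ^ (2 * n : ℤ) * S ^ (2 * n : ℤ)) * (T ^ i * S ^ j) * (T ^ (n : ℤ) * S ^ (n : ℤ))⁻¹) * H T l *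
        ((T ^ (2 * n : ℤ) * S ^ (2 * n : ℤ)) * (T ^ i * S ^ j) * (T ^ (n : ℤ) * S ^ (n : ℤ))⁻¹)⁻¹)
      (H T l') := by
  obtain ⟨u, hu⟩ := Int.eq_ofNat_of_zero_le (show 0 ≤ n + i by omega)
  obtain ⟨v, hv⟩ := Int.eq_ofNat_of_zero_le (show 0 ≤ n + j by omega)
  have e1 := (mulTS hK (2 * n) (2 * n) i j).right (T ^ (n : ℤ) * S ^ (n : ℤ))⁻¹
  have e2 := mulTS hK (2 * n + i) (2 * n + j - n) (-n) 0
  have e3 := e1.trans ((E.of_eq (show _ = T ^ (2 * n + i : ℤ) * S ^ (2 * n + j - n : ℤ) *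
    (T ^ (-n : ℤ) * S ^ (0 : ℤ)) by rw [zpow_sub]; group)).trans e2)
  rw [show (2 * n + i + -n : ℤ) = (u : ℕ) by omega,
    show (2 * n + j - n + 0 : ℤ) = (v : ℕ) by omega, zpow_natCast, zpow_natCast] at e3
  obtain ⟨l', hl', e4⟩ := shift hK u v l
  refine ⟨l', by omega, ?_⟩
  refine ((e3.cj (E.refl (H T l))).trans e4).mono ?_
  have b1 : (2 * n : ℤ).natAbs * i.natAbs * K ≤ 2 * (n * n) * K := by
    refine Nat.mul_le_mul_right K ?_
    calc _ ≤ (2 * n) * n := Nat.mul_le_mul (by omega) hi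
      _ = _ := by ring
  have b2 : (2 * n + j - n : ℤ).natAbs * (-n : ℤ).natAbs * K ≤ 2 * (n * n) * K := by
    refine Nat.mul_le_mul_right K ?_
    calc _ ≤ (2 * n) * n := Nat.mul_le_mul (by omega) (by omega)
      _ = _ := by ring
  have b3 : 4 * K * v * (l.length + v) ≤ 80 * K * (n * n) := by
    calc _ ≤ 4 * K * (2 * n) * (8 * n + 2 * n) :=
          Nat.mul_le_mul (Nat.mul_le_mul le_rfl (by omega)) (by omega)
      _ = _ := by ring
  calc _ ≤ 0 + (2 * (n * n) * K + (0 + 2 * (n * n) * K)) + 0 + (0 + (2 * (n * n) * K + (0 + 2 * (n * n) * K))) + 80 * K * (n * n) := by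
        omega
    _ = _ := by ring

lemma base (hK : Cst p K) (L : List (Gen × Bool)) (hL : L.length ≤ 1) :
    ∃ (l : List (ZMod p)) (i j : ℤ), l.length ≤ 8 ∧ i.natAbs ≤ 1 ∧ j.natAbs ≤ 1 ∧
      E p (16000 * K) (FreeGroup.mk L)
        ((T ^ (1 : ℤ) * S ^ (1 : ℤ))⁻¹ * H T l * (T ^ (1 : ℤ) * S ^ (1 : ℤ)) * (T ^ i * S ^ j)) := by
  have key : ∀ c : ZMod p, ∃ l : List (ZMod p), l.length ≤ 8 ∧ E p (4 * K) (A c)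
        ((T ^ (1 : ℤ) * S ^ (1 : ℤ))⁻¹ * H T l * (T ^ (1 : ℤ) * S ^ (1 : ℤ)) *
          (T ^ (0 : ℤ) * S ^ (0 : ℤ))) := by
    intro c
    obtain ⟨l, hl, e⟩ := lower hK [c]
    refine ⟨0 :: l, by simp [hl], ?_⟩
    have e1 := ((e.cj' T).left (T * S)⁻¹).right (T * S)
    refine ((E.of_eq ?_).trans (e1.trans (E.of_eq ?_))).mono (l := 4 * K) ?_
    · simp only [H]; group
    · simp only [H, A_zero]; group
    · simp
  have hA1 : A (1 : ZMod p) = FreeGroup.of a := by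
    have : Fact (1 < p) := ⟨(Fact.out : p.Prime).one_lt⟩
    simp [A, ZMod.val_one]
  obtain _ | ⟨⟨x, b⟩, L⟩ := L
  · exact ⟨[], 0, 0, by simp, by simp, by simp, (E.of_eq (by rw [← FreeGroup.one_eq_mk]; simp [H])).mono
      (Nat.zero_le _)⟩
  · obtain rfl : L = [] := List.length_eq_zero_iff.1 (by simpa using hL)
    have hb : ∀ x : Gen, FreeGroup.mk [(x, false)] = (FreeGroup.of x)⁻¹ := fun x => by
      simp [FreeGroup.of, FreeGroup.invRev]
    have hb' : ∀ x : Gen, FreeGroup.mk [(x, true)] = FreeGroup.of x := fun x => rfl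
    cases x <;> cases b
    · obtain ⟨l, hl, e⟩ := key (-1)
      refine ⟨l, 0, 0, hl, by simp, by simp, ?_⟩
      rw [hb, ← hA1]
      exact ((hK.neg 1).trans e).mono (by omega)
    · obtain ⟨l, hl, e⟩ := key 1
      refine ⟨l, 0, 0, hl, by simp, by simp, ?_⟩
      rw [hb', ← hA1]
      exact e.mono (by omega)
    · exact ⟨[], 0, -1, by simp, by simp, by simp, (E.of_eq (by rw [hb]; simp [H])).mono
        (Nat.zero_le _)⟩
    · exact ⟨[], 0, 1, by simp, by simp, by simp, (E.of_eq (by rw [hb']; simp [H])).mono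
        (Nat.zero_le _)⟩
    · exact ⟨[], -1, 0, by simp, by simp, by simp, (E.of_eq (by rw [hb]; simp [H])).mono
        (Nat.zero_le _)⟩
    · exact ⟨[], 1, 0, by simp, by simp, by simp, (E.of_eq (by rw [hb']; simp [H])).mono
        (Nat.zero_le _)⟩

lemma mainNF (hK : Cst p K) : ∀ (k : ℕ) (L : List (Gen × Bool)), L.length ≤ 2 ^ k →
    ∃ (l : List (ZMod p)) (i j : ℤ), l.length ≤ 8 * 2 ^ k ∧ i.natAbs ≤ 2 ^ k ∧ j.natAbs ≤ 2 ^ k ∧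
      E p (16000 * K * 4 ^ k) (FreeGroup.mk L)
        ((T ^ ((2 ^ k : ℕ) : ℤ) * S ^ ((2 ^ k : ℕ) : ℤ))⁻¹ * H T l *
          (T ^ ((2 ^ k : ℕ) : ℤ) * S ^ ((2 ^ k : ℕ) : ℤ)) * (T ^ i * S ^ j)) := by
  intro k
  induction k with
  | zero => intro L hL; simpa using base hK L (by simpa using hL)
  | succ k ih =>
    intro L hL
    have hq : 2 ^ (k + 1) = 2 * 2 ^ k := by ring
    have h4 : 4 ^ k = 2 ^ k * 2 ^ k := by rw [← mul_pow]; norm_num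
    have h16 : 2 ^ (k + 4) = 16 * 2 ^ k := by ring
    have h4' : 4 ^ (k + 1) = 4 * 4 ^ k := by ring
    have h4'' : 4 ^ (k + 4) = 256 * 4 ^ k := by ring
    rw [h4', h4, hq]
    rw [h4] at h4'' ih
    rw [hq] at hL
    generalize hn : 2 ^ k = n at *
    obtain ⟨l1, i1, j1, hl1, hi1, hj1, e1⟩ := ih (L.take n) (by simp)
    obtain ⟨l2, i2, j2, hl2, hi2, hj2, e2⟩ := ih (L.drop n) (by simp; omega)
    obtain ⟨r1, hr1, d1⟩ := gshift hK n 0 0 (by simp) (by simp) l1 hl1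
    obtain ⟨r2, hr2, d2⟩ := gshift hK n i1 j1 hi1 hj1 l2 hl2
    obtain ⟨q1, hq1, f1⟩ := H_pad T r1 (2 ^ (k + 4)) (by omega)
    obtain ⟨q2, hq2, f2⟩ := H_pad T r2 (2 ^ (k + 4)) (by omega)
    obtain ⟨l, hl, e3⟩ := mergeH hK (k + 4) q1 q2 hq1 hq2
    rw [f1, f2] at e3
    refine ⟨l, i1 + i2, j1 + j2, by omega, by omega, by omega, ?_⟩
    push_cast
    have g1 := e1.mul e2
    rw [FreeGroup.mul_mk, List.take_append_drop] at g1
    have g2 := ((((d1.mul d2).trans e3).left (T ^ (2 * n : ℤ) * S ^ (2 * n : ℤ))⁻¹).right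
      (T ^ (2 * n : ℤ) * S ^ (2 * n : ℤ))).mul (mulTS hK i1 j1 i2 j2)
    have g3 := g1.trans ((E.of_eq (by group)).trans g2)
    refine g3.mono ?_
    have b1 : j1.natAbs * i2.natAbs * K ≤ n * n * K := by gcongr
    rw [h4'']
    calc _ ≤ 16000 * K * (n * n) + 16000 * K * (n * n) + (0 + (88 * K * (n * n) + 88 * K * (n * n) +
          120 * K * (256 * (n * n)) + n * n * K)) := by omega
      _ = 62897 * (K * (n * n)) := by ring
      _ ≤ 64000 * (K * (n * n)) := by omega
      _ = _ := by ring

lemma finish (hK : Cst p K) (k : ℕ) (w : FreeGroup Gen) (hw : w.norm ≤ 2 ^ k)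
    (h1 : PresentedGroup.mk (LamRel p) w = 1) : Ar p (16000 * K * 4 ^ k) w := by
  obtain ⟨l, i, j, -, -, -, e⟩ := mainNF hK k w.toWord hw
  rw [FreeGroup.mk_toWord] at e
  generalize ((2 ^ k : ℕ) : ℤ) = n at e
  have e0 := e.mk
  rw [h1, ← map_one (PresentedGroup.mk (LamRel p))] at e0
  have hi : i = 0 := by
    have := lift_eq fT (by simp [fT]) (by simp [fT]) (by simp [fT]) (by simp [fT]) e0
    simp only [map_mul, map_one, map_inv, H_lift_comm fT rfl, map_zpow, FreeGroup.lift_apply_of] at this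
    have := congrArg Multiplicative.toAdd this
    simpa [fT] using this.symm
  have hj : j = 0 := by
    have := lift_eq fS (by simp [fS]) (by simp [fS]) (by simp [fS]) (by simp [fS]) e0
    simp only [map_mul, map_one, map_inv, H_lift_comm fS rfl, map_zpow, FreeGroup.lift_apply_of] at this
    have := congrArg Multiplicative.toAdd this
    simpa [fS] using this.symm
  subst hi hj
  have h2 := act_eq p e0
  have h3 : act p (H T l) = act p (H T ([] : List (ZMod p))) := by
    have h5 : H T l = (T ^ n * S ^ n) * ((T ^ n * S ^ n)⁻¹ * H T l * (T ^ n * S ^ n) *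
      (T ^ (0 : ℤ) * S ^ (0 : ℤ))) * (T ^ n * S ^ n)⁻¹ := by group
    rw [h5, map_mul, map_mul _ (T ^ n * S ^ n), ← h2, map_one, mul_one, map_inv, mul_inv_cancel]
    simp [H]
  have h4 := H_of_poly_zero p T l (poly_of_act p h3)
  rw [h4] at e
  have : E p (16000 * K * 4 ^ k) w 1 := by simpa using e
  simpa [E] using this

end final

end Baumslag

open Baumslag

/-- Theorem B of Cornulier–Tessera: Baumslag's group `Λ_p` has
quadratic Dehn function with respect to its standard presentation. -/
theorem stmt14 (p : ℕ) (hp : p.Prime) :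
    ∃ C : ℝ, ∀ w : FreeGroup Gen,
      PresentedGroup.mk (LamRel p) w = 1 →
      ∃ L : List (FreeGroup Gen × FreeGroup Gen),
        (L.length : ℝ) ≤ C * (w.norm : ℝ) ^ 2 + C ∧
        (∀ q ∈ L, q.2 ∈ LamRel p ∨ q.2⁻¹ ∈ LamRel p) ∧
        w = (L.map fun q => q.1 * q.2 * q.1⁻¹).prod := by
  have : Fact p.Prime := ⟨hp⟩
  obtain ⟨K, -, hK⟩ := exists_Cst p hp
  refine ⟨8 * (16000 * K : ℕ), fun w hw => ?_⟩
  obtain ⟨k, hk1, hk2⟩ : ∃ k, w.norm ≤ 2 ^ k ∧ 2 ^ k ≤ 2 * w.norm + 1 := by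
    rcases Nat.eq_zero_or_pos w.norm with h | h
    · exact ⟨0, by simp [h], by simp⟩
    · refine ⟨Nat.log 2 w.norm + 1, (Nat.lt_pow_succ_log_self (by norm_num) _).le, ?_⟩
      have := Nat.pow_log_le_self 2 h.ne'
      rw [pow_succ]; omega
  obtain ⟨L, h1, h2, h3⟩ := finish hK k w hk1 hw
  refine ⟨L, ?_, h2, h3⟩
  have h4 : 4 ^ k ≤ 8 * w.norm ^ 2 + 8 := by
    calc 4 ^ k = 2 ^ k * 2 ^ k := by rw [← mul_pow]; norm_num
      _ ≤ (2 * w.norm + 1) * (2 * w.norm + 1) := Nat.mul_le_mul hk2 hk2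
      _ ≤ _ := by nlinarith [sq_nonneg ((w.norm : ℤ) - 1), Nat.le_self_pow two_ne_zero w.norm]
  have h5 : L.length ≤ 16000 * K * (8 * w.norm ^ 2 + 8) := h1.trans (Nat.mul_le_mul le_rfl h4)
  have h6 : (L.length : ℝ) ≤ ((16000 * K * (8 * w.norm ^ 2 + 8) : ℕ) : ℝ) := by exact_mod_cast h5
  refine h6.trans (le_of_eq ?_)
  push_cast
  ring
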